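/- Let μ₁, μ₂ > 0, 0 ≤ μ₃ < min(μ₁, μ₂), set ρ = μ₃/√(μ₁ μ₂), and let G₁, G₂: ℕ → ℝ satisfy ∑_{x=0}^∞ p(x; μᵢ) Gᵢ(x)² < ∞ for i = 1, 2. Let k* ≥ 1 be an integer such that c_{G₁}(k; μ₁) c_{G₂}(k; μ₂) = 0 for every integer k with 1 ≤ k < k*. Then Cov(G₁, G₂) = (c_{G₁}(k*; μ₁) c_{G₂}(k*; μ₂) / k*!) μ₃^{k*} + R, where the remainder satisfies |R| ≤ (ρ^{k*+1}/(1 − ρ)) · √(∑_x p(x; μ₁) G₁(x)²) · √(∑_y p(y; μ₂) G₂(y)²), and Cov(G₁, G₂) = ∑_{x,y} p(x, y; μ₁, μ₂, μ₃) G₁(x) G₂(y) − (∑_x p(x; μ₁) G₁(x)) (∑_y p(y; μ₂) G₂(y)). -/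

import Mathlib

/-!
The covariance is an absolutely convergent series in the Charlier coefficients,
`∑_{k ≥ 1} c₁(k) c₂(k) μ₃ ^ k / k!`, and each term is at most `ρ ^ k ‖G₁‖ ‖G₂‖` in absolute value.
Since the terms with `1 ≤ k < k*` vanish, the remainder is a tail dominated by the geometric series
`∑_{k > k*} ρ ^ k = ρ ^ (k* + 1) / (1 - ρ)`.

Both ingredients come from one computation, `hasSum_mixed`: an evaluation of the moments
`E[Q_x(N; α) Q_y(N; β)]` for Poisson `N` and normalized Charlier polynomials
`Q_x(n; α) = ∑ j, C(x, j) α ^ j n(n-1)⋯(n-j+1)`, by induction on the degree through the identity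
`E[N f(N)] = l E[f(N + 1)]`, `l` being the mean. With both parameters matching the mean it gives the norm
`E[P_k²] = k! μ ^ k` (`hasSum_charlier_sq`), hence by Cauchy–Schwarz the bound on each term. The
duality `Q_k(x) = Q_x(k)` lets the degree serve as the Poisson variable, and the same formula becomes
the expansion of the bivariate mass function in Charlier polynomials (`hasSum_mehler`). Neither
completeness of the Charlier system nor orthogonality of distinct degrees is required.
-/

open scoped BigOperators
open MeasureTheory Filter Topology

/-- Charlier polynomial `P_k(x; μ)`. -/
noncomputable def charlier (μ : ℝ) (k x : ℕ) : ℝ :=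
  ∑ j ∈ Finset.range (k + 1),
    (k.choose j : ℝ) * (-μ) ^ (k - j) * (x.descFactorial j : ℝ)

/-- Poisson probability mass function `p(x; μ)`. -/
noncomputable def poissonPMF (μ : ℝ) (x : ℕ) : ℝ :=
  Real.exp (-μ) * μ ^ x / (x.factorial : ℝ)

/-- Backward difference operator `D₋`. -/
def Dminus (g : ℕ → ℝ) : ℕ → ℝ :=
  fun x => g x - if x = 0 then 0 else g (x - 1)

/-- Forward difference operator `D₊`. -/
def Dplus (g : ℕ → ℝ) : ℕ → ℝ :=
  fun x => g (x + 1) - g x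

/-- Bivariate Poisson probability mass function `p(x, y; μ₁, μ₂, μ₃)`. -/
noncomputable def poissonPMF₂ (μ₁ μ₂ μ₃ : ℝ) (x y : ℕ) : ℝ :=
  ∑ j ∈ Finset.range (min x y + 1),
    poissonPMF (μ₁ - μ₃) (x - j) * poissonPMF (μ₂ - μ₃) (y - j) * poissonPMF μ₃ j

/-- Charlier coefficient `c_G(k; μ)`. -/
noncomputable def charlierCoeff (μ : ℝ) (G : ℕ → ℝ) (k : ℕ) : ℝ :=
  (μ ^ k)⁻¹ * ∑' x : ℕ, poissonPMF μ x * G x * charlier μ k x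

/-! ### Normalized Charlier polynomials -/

/-- The polynomial `∑ j, C(k, j) α ^ j x(x-1)⋯(x-j+1)`: for `α = -1/μ` this is the
Charlier polynomial normalized to take the value `1` at `x = 0`. -/
noncomputable def charlierNorm (α : ℝ) (k x : ℕ) : ℝ :=
  ∑ j ∈ Finset.range (k + 1), (k.choose j : ℝ) * α ^ j * (x.descFactorial j : ℝ)

lemma charlier_eq {μ : ℝ} (hμ : 0 < μ) (k x : ℕ) :
    charlier μ k x = (-μ) ^ k * charlierNorm (-μ⁻¹) k x := by
  unfold charlier charlierNorm
  rw [Finset.mul_sum]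
  refine Finset.sum_congr rfl fun j hj => ?_
  have hj' : j ≤ k := Nat.lt_succ_iff.mp (Finset.mem_range.mp hj)
  obtain ⟨i, rfl⟩ := Nat.exists_eq_add_of_le hj'
  have : (-μ) ^ j * (-μ⁻¹) ^ j = 1 := by
    rw [← mul_pow, neg_mul_neg, mul_inv_cancel₀ hμ.ne', one_pow]
  rw [Nat.add_sub_cancel_left, pow_add]
  linear_combination (-(((j + i).choose j : ℝ) * (-μ) ^ i * (x.descFactorial j : ℝ))) * this

/-- Duality: degree and argument play the same role. -/
lemma charlierNorm_symm (α : ℝ) (k x : ℕ) : charlierNorm α k x = charlierNorm α x k := by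
  have key : ∀ a b : ℕ, charlierNorm α a b = ∑ j ∈ Finset.range (a + b + 1),
      (a.choose j : ℝ) * α ^ j * ((j.factorial : ℝ) * (b.choose j : ℝ)) := by
    intro a b
    unfold charlierNorm
    simp only [Nat.descFactorial_eq_factorial_mul_choose, Nat.cast_mul]
    refine Finset.sum_subset (Finset.range_mono (by omega)) fun j _ hj => ?_
    rw [Nat.choose_eq_zero_of_lt (by simpa using hj)]
    simp
  rw [key, key, Nat.add_comm k x]
  exact Finset.sum_congr rfl fun j _ => by ring

lemma charlierNorm_succ_left (α : ℝ) (k x : ℕ) :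
    charlierNorm α (k + 1) x = charlierNorm α k x + α * (x * charlierNorm α k (x - 1)) := by
  have hd : ∀ j : ℕ, (x.descFactorial (j + 1) : ℝ) = x * ((x - 1).descFactorial j : ℝ) := by
    intro j
    cases x with
    | zero => simp
    | succ x => rw [Nat.succ_descFactorial_succ]; push_cast; rfl
  have hk : charlierNorm α k x =
      ∑ j ∈ Finset.range (k + 2), (k.choose j : ℝ) * α ^ j * (x.descFactorial j : ℝ) := by
    rw [Finset.sum_range_succ, Nat.choose_succ_self]
    simp [charlierNorm]
  rw [hk]
  unfold charlierNorm
  rw [Finset.sum_range_succ', Finset.sum_range_succ' _ (k + 1), Finset.mul_sum, Finset.mul_sum]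
  simp only [Nat.choose_succ_succ, hd, Nat.choose_zero_right]
  rw [add_right_comm, ← Finset.sum_add_distrib]
  congr 1
  refine Finset.sum_congr rfl fun j _ => ?_
  push_cast
  ring

lemma charlierNorm_succ_right (α : ℝ) (k x : ℕ) :
    charlierNorm α k (x + 1) = charlierNorm α k x + α * (k * charlierNorm α (k - 1) x) := by
  rw [charlierNorm_symm, charlierNorm_succ_left, charlierNorm_symm α x, charlierNorm_symm α x]

/-! ### Poisson moments of products -/

/-- The finite sum which, for `A = 1 + α l`, `B = 1 + β l` and `c = α β l`, is the Poisson moment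
`E[Q_x(N; α) Q_y(N; β)]` of normalized Charlier polynomials, `N` having mean `l`.
Terms with `m > y` vanish through the binomial coefficient, so the truncated exponent
`y - m` is harmless. -/
noncomputable def mixedMoment (A B c : ℝ) (x y : ℕ) : ℝ :=
  ∑ m ∈ Finset.range (x + 1), (m.factorial : ℝ) * (x.choose m : ℝ) * (y.choose m : ℝ) *
    c ^ m * A ^ (x - m) * B ^ (y - m)

lemma mixedMoment_succ (A B c : ℝ) (x y : ℕ) :
    mixedMoment A B c (x + 1) y =
      A * mixedMoment A B c x y + c * (y * mixedMoment A B c x (y - 1)) := by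
  have hA : A * mixedMoment A B c x y = ∑ m ∈ Finset.range (x + 2),
      (m.factorial : ℝ) * (x.choose m : ℝ) * (y.choose m : ℝ) *
        c ^ m * A ^ (x + 1 - m) * B ^ (y - m) := by
    rw [Finset.sum_range_succ, Nat.choose_succ_self, mixedMoment, Finset.mul_sum]
    simp only [Nat.cast_zero, mul_zero, zero_mul, add_zero]
    refine Finset.sum_congr rfl fun m hm => ?_
    rw [Nat.sub_add_comm (Nat.lt_succ_iff.mp (Finset.mem_range.mp hm)), pow_succ]
    ring
  have hy : ∀ m : ℕ, ((m : ℝ) + 1) * (y.choose (m + 1) : ℝ) = y * ((y - 1).choose m : ℝ) := by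
    intro m
    cases y with
    | zero => simp
    | succ y =>
      have := Nat.add_one_mul_choose_eq y m
      rw [Nat.add_sub_cancel]
      exact_mod_cast (by linarith : (m + 1) * (y + 1).choose (m + 1) = (y + 1) * y.choose m)
  rw [hA]
  unfold mixedMoment
  rw [Finset.sum_range_succ', Finset.sum_range_succ' _ (x + 1), Finset.mul_sum, Finset.mul_sum]
  simp only [Nat.choose_succ_succ x, Nat.choose_zero_right]
  rw [add_right_comm, ← Finset.sum_add_distrib]
  congr 1
  refine Finset.sum_congr rfl fun m _ => ?_
  rw [Nat.factorial_succ, show y - (m + 1) = y - 1 - m by omega, Nat.add_sub_add_right]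
  push_cast
  linear_combination ((m.factorial : ℝ) * (x.choose m : ℝ) * c ^ (m + 1) * A ^ (x - m) *
    B ^ (y - 1 - m)) * hy m

lemma hasSum_of_eq {f g : ℕ → ℝ} {a b : ℝ} (h : HasSum f a) (hfg : ∀ n, g n = f n) (hab : b = a) :
    HasSum g b :=
  hab ▸ h.congr_fun hfg

/-- The Poisson (Stein) identity `E[N f(N)] = l E[f(N + 1)]`, without normalization. -/
lemma hasSum_stein {l s : ℝ} {f : ℕ → ℝ}
    (hf : HasSum (fun n : ℕ => l ^ n / (n.factorial : ℝ) * f (n + 1)) s) :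
    HasSum (fun n : ℕ => l ^ n / (n.factorial : ℝ) * (n * f n)) (l * s) := by
  rw [← hasSum_nat_add_iff' 1]
  simp only [Finset.range_one, Finset.sum_singleton, Nat.cast_zero, zero_mul, mul_zero, sub_zero]
  refine (hf.mul_left l).congr_fun fun n => ?_
  have : (n.factorial : ℝ) ≠ 0 := by positivity
  rw [Nat.factorial_succ, pow_succ]
  push_cast
  field_simp

/-- Poisson moments of products of normalized Charlier polynomials with unrelated parameters. The
factor `exp l` makes up for the missing normalization of the weights `l ^ n / n!`. -/
theorem hasSum_mixed (l α β : ℝ) (x y : ℕ) :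
    HasSum (fun n : ℕ => l ^ n / (n.factorial : ℝ) * (charlierNorm α x n * charlierNorm β y n))
      (Real.exp l * mixedMoment (1 + α * l) (1 + β * l) (α * β * l) x y) := by
  induction x generalizing y with
  | zero =>
    have h0 : ∀ n, charlierNorm α 0 n = 1 := by simp [charlierNorm]
    have hm : ∀ y, mixedMoment (1 + α * l) (1 + β * l) (α * β * l) 0 y = (1 + β * l) ^ y := by
      simp [mixedMoment]
    simp only [h0, hm, one_mul]
    induction y with
    | zero =>
      have := NormedSpace.expSeries_div_hasSum_exp (𝔸 := ℝ) l
      rw [← Real.exp_eq_exp_ℝ] at this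
      simpa [charlierNorm] using this
    | succ y ih =>
      have h := hasSum_stein (f := fun n => charlierNorm β y (n - 1)) (by simpa using ih)
      convert ih.add (h.mul_left β) using 1
      · ext n
        rw [charlierNorm_succ_left]
        ring
      · ring
  | succ x ih =>
    have h1 : HasSum (fun n : ℕ => l ^ n / (n.factorial : ℝ) *
        (charlierNorm α x n * charlierNorm β y (n + 1)))
        (Real.exp l * mixedMoment (1 + α * l) (1 + β * l) (α * β * l) x y + β * y *
          (Real.exp l * mixedMoment (1 + α * l) (1 + β * l) (α * β * l) x (y - 1))) := by
      convert (ih y).add ((ih (y - 1)).mul_left (β * y)) using 1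
      ext n
      rw [charlierNorm_succ_right]
      ring
    have h := hasSum_stein (f := fun n => charlierNorm α x (n - 1) * charlierNorm β y n)
      (by simpa using h1)
    convert (ih y).add (h.mul_left α) using 1
    · ext n
      rw [charlierNorm_succ_left]
      ring
    · rw [mixedMoment_succ]
      ring

/-! ### Norms and the expansion of the bivariate mass function -/

/-- The squared norm of the Charlier polynomial of degree `k` in `L²(Poisson μ)`. -/
theorem hasSum_charlier_sq {μ : ℝ} (hμ : 0 < μ) (k : ℕ) :
    HasSum (fun x : ℕ => poissonPMF μ x * charlier μ k x ^ 2) (k.factorial * μ ^ k) := by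
  have h := (hasSum_mixed μ (-μ⁻¹) (-μ⁻¹) k k).mul_left (Real.exp (-μ) * (-μ) ^ (2 * k))
  refine hasSum_of_eq h (fun x => ?_) ?_
  · rw [charlier_eq hμ, poissonPMF]
    ring
  · have h0 : 1 + -μ⁻¹ * μ = 0 := by field_simp; ring
    have h1 : -μ⁻¹ * -μ⁻¹ * μ = μ⁻¹ := by field_simp
    have hm : mixedMoment 0 0 μ⁻¹ k k = k.factorial * (μ⁻¹) ^ k := by
      rw [mixedMoment, Finset.sum_range_succ, Finset.sum_eq_zero]
      · simp
      · intro m hm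
        rw [zero_pow (Nat.sub_ne_zero_of_lt (Finset.mem_range.mp hm))]
        simp
    rw [h0, h1, hm, pow_mul, neg_sq]
    have : Real.exp (-μ) * Real.exp μ = 1 := by rw [← Real.exp_add]; simp
    have h2 : (μ ^ 2) ^ k * μ⁻¹ ^ k = μ ^ k := by
      rw [← mul_pow]; congr 1; field_simp
    linear_combination (-(k.factorial * μ ^ k : ℝ)) * this -
      (k.factorial * (Real.exp (-μ) * Real.exp μ) : ℝ) * h2

/-- Mehler-type expansion of the bivariate Poisson mass function in Charlier polynomials. By
duality it is `hasSum_mixed` with the degree `k` as the summation variable. -/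
theorem hasSum_mehler {μ₁ μ₂ : ℝ} (h₁ : 0 < μ₁) (h₂ : 0 < μ₂) (μ₃ : ℝ) (x y : ℕ) :
    HasSum (fun k : ℕ => μ₃ ^ k / (k.factorial * (μ₁ * μ₂) ^ k) *
        ((poissonPMF μ₁ x * charlier μ₁ k x) * (poissonPMF μ₂ y * charlier μ₂ k y)))
      (poissonPMF₂ μ₁ μ₂ μ₃ x y) := by
  have h := (hasSum_mixed μ₃ (-μ₁⁻¹) (-μ₂⁻¹) x y).mul_left (poissonPMF μ₁ x * poissonPMF μ₂ y)
  refine hasSum_of_eq h (fun k => ?_) ?_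
  · rw [charlier_eq h₁, charlier_eq h₂, charlierNorm_symm _ k x, charlierNorm_symm _ k y]
    have : (-μ₁) ^ k * (-μ₂) ^ k = (μ₁ * μ₂) ^ k := by rw [← mul_pow, neg_mul_neg]
    have h0 : (μ₁ * μ₂) ^ k ≠ 0 := by positivity
    have h0' : (k.factorial : ℝ) ≠ 0 := by positivity
    field_simp
    linear_combination (poissonPMF μ₁ x * charlierNorm (-(1 / μ₁)) x k * poissonPMF μ₂ y *
      charlierNorm (-(1 / μ₂)) y k * μ₃ ^ k) * this
  · have hm : mixedMoment (1 + -μ₁⁻¹ * μ₃) (1 + -μ₂⁻¹ * μ₃) (-μ₁⁻¹ * -μ₂⁻¹ * μ₃) x y =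
        ∑ m ∈ Finset.range (min x y + 1), (m.factorial : ℝ) * (x.choose m : ℝ) *
          (y.choose m : ℝ) * (-μ₁⁻¹ * -μ₂⁻¹ * μ₃) ^ m * (1 + -μ₁⁻¹ * μ₃) ^ (x - m) *
          (1 + -μ₂⁻¹ * μ₃) ^ (y - m) := by
      unfold mixedMoment
      symm
      refine Finset.sum_subset (Finset.range_mono (by omega)) fun m hx hm => ?_
      rw [Finset.mem_range] at hx hm
      rw [Nat.choose_eq_zero_of_lt (show y < m by omega)]
      simp
    rw [hm, poissonPMF₂, Finset.mul_sum, Finset.mul_sum]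
    refine Finset.sum_congr rfl fun j hj => ?_
    rw [Finset.mem_range] at hj
    obtain ⟨a, rfl⟩ := Nat.exists_eq_add_of_le (show j ≤ x by omega)
    obtain ⟨b, rfl⟩ := Nat.exists_eq_add_of_le (show j ≤ y by omega)
    have e : Real.exp (-(μ₁ - μ₃)) * Real.exp (-(μ₂ - μ₃)) * Real.exp (-μ₃) =
        Real.exp (-μ₁) * Real.exp (-μ₂) * Real.exp μ₃ := by
      rw [← Real.exp_add, ← Real.exp_add, ← Real.exp_add, ← Real.exp_add]
      congr 1; ring
    rw [Nat.add_sub_cancel_left, Nat.add_sub_cancel_left, Nat.cast_choose ℝ (Nat.le_add_right j a),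
      Nat.cast_choose ℝ (Nat.le_add_right j b), Nat.add_sub_cancel_left, Nat.add_sub_cancel_left,
      show 1 + -μ₁⁻¹ * μ₃ = (μ₁ - μ₃) / μ₁ by field_simp; ring,
      show 1 + -μ₂⁻¹ * μ₃ = (μ₂ - μ₃) / μ₂ by field_simp; ring,
      show -μ₁⁻¹ * -μ₂⁻¹ * μ₃ = μ₃ / (μ₁ * μ₂) by field_simp, div_pow, div_pow, div_pow, mul_pow]
    simp only [poissonPMF]
    have q1 : ((j + a).factorial : ℝ) ≠ 0 := by positivity
    have q2 : ((j + b).factorial : ℝ) ≠ 0 := by positivity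
    have q3 : (j.factorial : ℝ) ≠ 0 := by positivity
    have q4 : (a.factorial : ℝ) ≠ 0 := by positivity
    have q5 : (b.factorial : ℝ) ≠ 0 := by positivity
    rw [pow_add, pow_add]
    field_simp
    linear_combination (μ₃ ^ j * (μ₁ - μ₃) ^ a * (μ₂ - μ₃) ^ b) * e

/-! ### Covariance -/

lemma poissonPMF_nonneg {μ : ℝ} (hμ : 0 < μ) (x : ℕ) : 0 ≤ poissonPMF μ x := by
  unfold poissonPMF; positivity

/-- Cauchy–Schwarz for `G` against the Charlier polynomial of degree `k`. -/
lemma charlier_cauchy_schwarz {μ : ℝ} (hμ : 0 < μ) {G : ℕ → ℝ}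
    (hG : Summable (fun x : ℕ => poissonPMF μ x * (G x) ^ 2)) (k : ℕ) :
    Summable (fun x : ℕ => |poissonPMF μ x * G x * charlier μ k x|) ∧
      ∑' x : ℕ, |poissonPMF μ x * G x * charlier μ k x| ≤
        √(∑' x : ℕ, poissonPMF μ x * (G x) ^ 2) * √(k.factorial * μ ^ k) := by
  have hsq : ∀ (F : ℕ → ℝ) (x : ℕ),
      (√(poissonPMF μ x) * |F x|) ^ (2 : ℝ) = poissonPMF μ x * F x ^ 2 := by
    intro F x
    rw [Real.rpow_two, mul_pow, Real.sq_sqrt (poissonPMF_nonneg hμ x), sq_abs]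
  have h := Real.summable_and_inner_le_Lp_mul_Lq_tsum_of_nonneg (p := 2) (q := 2)
    Real.HolderConjugate.two_two
    (f := fun x => √(poissonPMF μ x) * |G x|) (g := fun x => √(poissonPMF μ x) * |charlier μ k x|)
    (fun x => by positivity) (fun x => by positivity)
    (by simpa only [hsq] using hG)
    (by simpa only [hsq] using (hasSum_charlier_sq hμ k).summable)
  have e : ∀ x, √(poissonPMF μ x) * |G x| * (√(poissonPMF μ x) * |charlier μ k x|) =
      |poissonPMF μ x * G x * charlier μ k x| := by
    intro x
    rw [abs_mul, abs_mul, abs_of_nonneg (poissonPMF_nonneg hμ x)]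
    linear_combination (|G x| * |charlier μ k x|) * Real.mul_self_sqrt (poissonPMF_nonneg hμ x)
  simp only [e, hsq, ← Real.sqrt_eq_rpow, (hasSum_charlier_sq hμ k).tsum_eq] at h
  exact h

/-- Fubini for a series of product kernels `w k * u k x * v k y`, dominated in `ℓ¹` by a summable
sequence, which then also dominates the integrated series. -/
lemma tsum_product_swap {w B : ℕ → ℝ} {u v : ℕ → ℕ → ℝ} (hw : ∀ k, 0 ≤ w k)
    (hu : ∀ k, Summable fun x => |u k x|) (hv : ∀ k, Summable fun y => |v k y|) (hB : Summable B)
    (hbound : ∀ k, w k * ((∑' x, |u k x|) * ∑' y, |v k y|) ≤ B k) :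
    (∀ k, |w k * ((∑' x, u k x) * ∑' y, v k y)| ≤ B k) ∧
      ∑' q : ℕ × ℕ, ∑' k, w k * (u k q.1 * v k q.2) =
        ∑' k, w k * ((∑' x, u k x) * ∑' y, v k y) := by
  have habs_tsum : ∀ f : ℕ → ℝ, (Summable fun n => |f n|) → |∑' n, f n| ≤ ∑' n, |f n| :=
    fun f hf => by
      simp only [← Real.norm_eq_abs] at hf ⊢
      exact norm_tsum_le_tsum_norm hf
  refine ⟨fun k => ?_, ?_⟩
  · refine le_trans ?_ (hbound k)
    rw [abs_mul, abs_mul, abs_of_nonneg (hw k)]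
    exact mul_le_mul_of_nonneg_left (mul_le_mul (habs_tsum _ (hu k)) (habs_tsum _ (hv k))
      (abs_nonneg _) (tsum_nonneg fun _ => abs_nonneg _)) (hw k)
  have hprod : ∀ k, HasSum (fun q : ℕ × ℕ => |u k q.1| * |v k q.2|)
      ((∑' x, |u k x|) * ∑' y, |v k y|) := fun k =>
    (hu k).hasSum.mul (hv k).hasSum
      ((hu k).mul_of_nonneg (hv k) (fun _ => abs_nonneg _) (fun _ => abs_nonneg _))
  have habs : Summable fun r : ℕ × (ℕ × ℕ) => w r.1 * (u r.1 r.2.1 * v r.1 r.2.2) := by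
    rw [← summable_abs_iff]
    have e : ∀ r : ℕ × (ℕ × ℕ), |w r.1 * (u r.1 r.2.1 * v r.1 r.2.2)| =
        w r.1 * (|u r.1 r.2.1| * |v r.1 r.2.2|) := fun r => by
      rw [abs_mul, abs_mul, abs_of_nonneg (hw _)]
    simp only [e]
    rw [summable_prod_of_nonneg (fun r => mul_nonneg (hw _) (by positivity))]
    refine ⟨fun k => ((hprod k).mul_left (w k)).summable, ?_⟩
    refine hB.of_nonneg_of_le (fun k => tsum_nonneg fun _ => mul_nonneg (hw _) (by positivity))
      fun k => ?_
    exact ((hprod k).mul_left (w k)).tsum_eq.trans_le (hbound k)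
  rw [habs.tsum_comm (f := fun (k : ℕ) (q : ℕ × ℕ) => w k * (u k q.1 * v k q.2))]
  refine tsum_congr fun k => ?_
  have hp : Summable fun q : ℕ × ℕ => u k q.1 * v k q.2 :=
    Summable.of_abs (by simpa only [abs_mul] using (hprod k).summable)
  rw [tsum_mul_left]
  exact congrArg (w k * ·)
    ((Summable.of_abs (hu k)).hasSum.mul (Summable.of_abs (hv k)).hasSum hp).tsum_eq

/-- covariance expansion with a controlled remainder. -/
theorem covariance_leading_term_remainder (μ₁ μ₂ μ₃ : ℝ) (h₁ : 0 < μ₁) (h₂ : 0 < μ₂)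
    (h₃ : 0 ≤ μ₃) (h₃' : μ₃ < min μ₁ μ₂) (G₁ G₂ : ℕ → ℝ)
    (hG₁ : Summable (fun x : ℕ => poissonPMF μ₁ x * (G₁ x) ^ 2))
    (hG₂ : Summable (fun x : ℕ => poissonPMF μ₂ x * (G₂ x) ^ 2))
    (kstar : ℕ) (hkstar : 1 ≤ kstar)
    (hvanish : ∀ k : ℕ, 1 ≤ k → k < kstar →
      charlierCoeff μ₁ G₁ k * charlierCoeff μ₂ G₂ k = 0) :
    ∃ R : ℝ,
      (∑' q : ℕ × ℕ, poissonPMF₂ μ₁ μ₂ μ₃ q.1 q.2 * G₁ q.1 * G₂ q.2)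
          - (∑' x : ℕ, poissonPMF μ₁ x * G₁ x) * (∑' y : ℕ, poissonPMF μ₂ y * G₂ y)
        = charlierCoeff μ₁ G₁ kstar * charlierCoeff μ₂ G₂ kstar / (kstar.factorial : ℝ)
            * μ₃ ^ kstar + R ∧
      |R| ≤ (μ₃ / Real.sqrt (μ₁ * μ₂)) ^ (kstar + 1)
              / (1 - μ₃ / Real.sqrt (μ₁ * μ₂))
            * Real.sqrt (∑' x : ℕ, poissonPMF μ₁ x * (G₁ x) ^ 2)
            * Real.sqrt (∑' y : ℕ, poissonPMF μ₂ y * (G₂ y) ^ 2) := by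
  set ρ := μ₃ / √(μ₁ * μ₂) with hρ
  set N₁ := √(∑' x : ℕ, poissonPMF μ₁ x * (G₁ x) ^ 2)
  set N₂ := √(∑' y : ℕ, poissonPMF μ₂ y * (G₂ y) ^ 2)
  have hs : 0 < √(μ₁ * μ₂) := Real.sqrt_pos.mpr (mul_pos h₁ h₂)
  have hρ0 : 0 ≤ ρ := div_nonneg h₃ hs.le
  have hρ1 : ρ < 1 := by
    rw [hρ, div_lt_one hs, Real.lt_sqrt h₃]
    have := lt_min_iff.mp h₃'
    nlinarith
  set u : ℕ → ℕ → ℝ := fun k x => poissonPMF μ₁ x * G₁ x * charlier μ₁ k x with hu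
  set v : ℕ → ℕ → ℝ := fun k y => poissonPMF μ₂ y * G₂ y * charlier μ₂ k y with hv
  set w : ℕ → ℝ := fun k => μ₃ ^ k / (k.factorial * (μ₁ * μ₂) ^ k) with hw
  have hw0 : ∀ k, 0 ≤ w k := fun k => by simp only [hw]; positivity
  have hCu := charlier_cauchy_schwarz h₁ hG₁
  have hCv := charlier_cauchy_schwarz h₂ hG₂
  -- The norms of the two Charlier polynomials turn the Mehler weight into `ρ ^ k`.
  have hbound : ∀ k, w k * ((∑' x, |u k x|) * ∑' y, |v k y|) ≤ ρ ^ k * (N₁ * N₂) := by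
    intro k
    have hρk : w k * (√(k.factorial * μ₁ ^ k) * √(k.factorial * μ₂ ^ k)) = ρ ^ k := by
      rw [← Real.sqrt_mul (by positivity),
        show (k.factorial * μ₁ ^ k * (k.factorial * μ₂ ^ k) : ℝ) =
          (k.factorial * √(μ₁ * μ₂) ^ k) ^ 2 by
            rw [mul_pow, ← pow_mul, mul_comm k 2, pow_mul, Real.sq_sqrt (by positivity), mul_pow]
            ring,
        Real.sqrt_sq (by positivity), hw, hρ, div_pow]
      have : (μ₁ * μ₂) ^ k = √(μ₁ * μ₂) ^ k * √(μ₁ * μ₂) ^ k := by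
        rw [← mul_pow, Real.mul_self_sqrt (by positivity)]
      simp only [this]
      field_simp
    calc w k * ((∑' x, |u k x|) * ∑' y, |v k y|)
        ≤ w k * ((N₁ * √(k.factorial * μ₁ ^ k)) * (N₂ * √(k.factorial * μ₂ ^ k))) := by
          refine mul_le_mul_of_nonneg_left ?_ (hw0 k)
          exact mul_le_mul (hCu k).2 (hCv k).2 (tsum_nonneg fun _ => abs_nonneg _) (by positivity)
      _ = ρ ^ k * (N₁ * N₂) := by rw [← hρk]; ring
  have hgeo : Summable fun k => ρ ^ k * (N₁ * N₂) :=
    (summable_geometric_of_lt_one hρ0 hρ1).mul_right _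
  set a : ℕ → ℝ := fun k => w k * ((∑' x, u k x) * ∑' y, v k y) with ha
  obtain ⟨hale, hswap⟩ := tsum_product_swap hw0 (fun k => (hCu k).1) (fun k => (hCv k).1) hgeo hbound
  have hasum : Summable a := Summable.of_abs (hgeo.of_nonneg_of_le (fun _ => abs_nonneg _) hale)
  have hE : ∑' q : ℕ × ℕ, poissonPMF₂ μ₁ μ₂ μ₃ q.1 q.2 * G₁ q.1 * G₂ q.2 = ∑' k, a k := by
    rw [← hswap]
    refine tsum_congr fun q => ?_
    rw [mul_assoc, ← (hasSum_mehler h₁ h₂ μ₃ q.1 q.2).tsum_eq, ← tsum_mul_right]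
    refine tsum_congr fun k => ?_
    simp only [hw]
    ring
  have hacoef : ∀ k, a k =
      charlierCoeff μ₁ G₁ k * charlierCoeff μ₂ G₂ k / (k.factorial : ℝ) * μ₃ ^ k := by
    intro k
    simp only [ha, hw, hu, hv, charlierCoeff, mul_pow]
    field_simp
  have ha0 : a 0 = (∑' x : ℕ, poissonPMF μ₁ x * G₁ x) * (∑' y : ℕ, poissonPMF μ₂ y * G₂ y) := by
    simp [ha, hw, hu, hv, charlier]
  refine ⟨∑' k, a (k + (kstar + 1)), ?_, ?_⟩
  · rw [hE, ← hasum.sum_add_tsum_nat_add (kstar + 1), Finset.sum_range_succ,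
      Finset.sum_eq_single 0, ha0, hacoef kstar]
    · ring
    · intro k hk hk0
      rw [hacoef, hvanish k (Nat.one_le_iff_ne_zero.mpr hk0) (Finset.mem_range.mp hk)]
      simp
    · intro h
      exact absurd (Finset.mem_range.mpr hkstar) h
  · have hg : HasSum (fun k => ρ ^ (k + (kstar + 1)) * (N₁ * N₂))
        (ρ ^ (kstar + 1) / (1 - ρ) * N₁ * N₂) := by
      refine hasSum_of_eq ((hasSum_geometric_of_lt_one hρ0 hρ1).mul_left
        (ρ ^ (kstar + 1) * (N₁ * N₂))) (fun k => ?_) ?_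
      · ring
      · ring
    rw [← Real.norm_eq_abs]
    exact tsum_of_norm_bounded hg fun k => (Real.norm_eq_abs _).trans_le (hale (k + (kstar + 1)))
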